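/- (Finite-time closeness of patched MALA and forward Euler in total variation.) Let U satisfy Assumption 1. There exists E_⋆ > 0 such that for every T > 0 there exists C(T) > 0 with the following property: for every stepsize h < 1, every x ∈ ℝ^n and every t ∈ [0,T], one has ‖P̄_h^{⌊t/h⌋}(x,·) − P̃_h^{⌊t/h⌋}(x,·)‖_TV ≤ C(T)·√h·U(x)³, where P̃_h is the forward Euler kernel and P̄_h the patched MALA kernel. -/

import Mathlib

open MeasureTheory Real Filter
open scoped ENNReal

noncomputable section

abbrev Euc (n : ℕ) := EuclideanSpace ℝ (Fin n)

/-- Second derivative of `U` at `x` as a bilinear form. -/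
def D2 {n : ℕ} (U : Euc n → ℝ) (x v w : Euc n) : ℝ :=
  iteratedFDeriv ℝ 2 U x ![v, w]

/-- Laplacian of `U` at `x`. -/
def lapl {n : ℕ} (U : Euc n → ℝ) (x : Euc n) : ℝ :=
  ∑ i, D2 U x (EuclideanSpace.single i 1) (EuclideanSpace.single i 1)

/-- Assumption 1 on the potential `U`. -/
structure Assumption1 (n : ℕ) (β : ℝ) (U : Euc n → ℝ) where
  smooth : ContDiff ℝ 4 U
  c : ℝ
  d : ℝ
  EB : ℝ
  c_pos : 0 < c
  c_lt : c < β
  d_pos : 0 < d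
  one_le : ∀ x, 1 ≤ U x
  quad_growth : ∀ C > (0:ℝ), ∃ E > (0:ℝ), ∀ x, U x > E → C * (1 + ‖x‖ ^ 2) ≤ U x
  driftB : ∀ x, U x > EB → lapl U x ≤ c * ‖gradient U x‖ ^ 2 - d * U x
  hess_lb : ∃ C : ℝ, 0 ≤ C ∧ ∀ x η : Euc n, -C * ‖η‖ ^ 2 ≤ D2 U x η η
  deriv_bound : ∃ C > (0:ℝ), ∀ x,
    ‖iteratedFDeriv ℝ 4 U x‖ ⊔ ‖iteratedFDeriv ℝ 3 U x‖ ⊔ ‖iteratedFDeriv ℝ 2 U x‖ ⊔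
      ‖gradient U x‖ ≤ C * U x

/-- The Gibbs measure with density `Z⁻¹ exp(-β U x)`. -/
def gibbs (n : ℕ) (β : ℝ) (U : Euc n → ℝ) : Measure (Euc n) :=
  volume.withDensity fun x => ENNReal.ofReal (exp (-β * U x) / ∫ y, exp (-β * U y))

/-- Total variation distance, `‖μ - ν‖_TV = 2 sup_A |μ(A) - ν(A)|`. -/
def tvDist {α : Type*} [MeasurableSpace α] (μ ν : Measure α) : ℝ :=
  2 * ⨆ A : {A : Set α // MeasurableSet A}, |(μ A.1).toReal - (ν A.1).toReal|

/-- Forward Euler transition density `q_h(x,y)`. -/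
def eulerDensity (n : ℕ) (β h : ℝ) (U : Euc n → ℝ) (x y : Euc n) : ℝ :=
  (4 * π * β⁻¹ * h) ^ (-(n : ℝ) / 2) *
    exp (-‖y - x + h • gradient U x‖ ^ 2 / (4 * β⁻¹ * h))

/-- MALA acceptance probability `α_h(x,y)`. -/
def accept (n : ℕ) (β h : ℝ) (U : Euc n → ℝ) (x y : Euc n) : ℝ :=
  min 1 ((eulerDensity n β h U y x * exp (-β * U y)) /
         (eulerDensity n β h U x y * exp (-β * U x)))

/-- One-step MALA transition kernel. -/
def malaKernel (n : ℕ) (β h : ℝ) (U : Euc n → ℝ) (x : Euc n) : Measure (Euc n) :=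
  volume.withDensity (fun y => ENNReal.ofReal (accept n β h U x y * eulerDensity n β h U x y))
  + (1 - ∫⁻ y, ENNReal.ofReal (accept n β h U x y * eulerDensity n β h U x y)) • Measure.dirac x

/-- `k`-step iterate of a transition kernel. -/
def iterKernel {α : Type*} [MeasurableSpace α] (κ : α → Measure α) : ℕ → α → Measure α
  | 0, x => Measure.dirac x
  | k + 1, x => (iterKernel κ k x).bind κ

/-- The level set `R_h = {x : U(x) < E_⋆ h^{-1/4}}`. -/
def Rset (n : ℕ) (h Estar : ℝ) (U : Euc n → ℝ) : Set (Euc n) :=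
  {x | U x < Estar * h ^ (-(1:ℝ) / 4)}

open scoped Classical in
/-- Patched MALA acceptance probability. -/
def acceptBar (n : ℕ) (β h Estar : ℝ) (U : Euc n → ℝ) (x y : Euc n) : ℝ :=
  if x ∈ Rset n h Estar U ∧ y ∈ Rset n h Estar U then accept n β h U x y else 0

/-- One-step patched MALA transition kernel. -/
def patchedKernel (n : ℕ) (β h Estar : ℝ) (U : Euc n → ℝ) (x : Euc n) : Measure (Euc n) :=
  volume.withDensity
    (fun y => ENNReal.ofReal (acceptBar n β h Estar U x y * eulerDensity n β h U x y))
  + (1 - ∫⁻ y, ENNReal.ofReal (acceptBar n β h Estar U x y * eulerDensity n β h U x y)) •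
      Measure.dirac x

/-- Standard Gaussian measure `N(0, I)` on `ℝ^n`. -/
def stdGaussian (n : ℕ) : Measure (Euc n) :=
  volume.withDensity fun ξ => ENNReal.ofReal ((2 * π) ^ (-(n : ℝ) / 2) * exp (-‖ξ‖ ^ 2 / 2))

/-- Forward Euler transition kernel. -/
def eulerKernel (n : ℕ) (β h : ℝ) (U : Euc n → ℝ) (x : Euc n) : Measure (Euc n) :=
  volume.withDensity fun y => ENNReal.ofReal (eulerDensity n β h U x y)


lemma line_hasDerivAt {n : ℕ} {U : Euc n → ℝ} (hs : ContDiff ℝ 4 U) (x v : Euc n) (k : ℕ)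
    (hk : k < 4) (s : ℝ) :
    HasDerivAt (fun s : ℝ => iteratedFDeriv ℝ k U (x + s • v) (fun _ => v))
      (iteratedFDeriv ℝ (k + 1) U (x + s • v) (fun _ => v)) s := by
  have hd : Differentiable ℝ (iteratedFDeriv ℝ k U) :=
    hs.differentiable_iteratedFDeriv (by exact_mod_cast hk)
  have h1 : HasDerivAt (fun s : ℝ => x + s • v) v s := by
    simpa using ((hasDerivAt_id s).smul_const v).const_add x
  have h2 := (hd (x + s • v)).hasFDerivAt.comp_hasDerivAt s h1
  have h3 := (ContinuousMultilinearMap.apply ℝ (fun _ : Fin k => Euc n) ℝ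
    (fun _ => v)).hasFDerivAt.comp_hasDerivAt s h2
  rw [iteratedFDeriv_succ_apply_left]
  exact h3

lemma line_bound {n : ℕ} {U : Euc n → ℝ} (z v : Euc n) (k : ℕ) :
    |iteratedFDeriv ℝ k U z (fun _ => v)| ≤ ‖iteratedFDeriv ℝ k U z‖ * ‖v‖ ^ k := by
  have := (iteratedFDeriv ℝ k U z).le_opNorm (fun _ => v)
  simpa using this

lemma iter_one {n : ℕ} {U : Euc n → ℝ} (z v : Euc n) :
    iteratedFDeriv ℝ 1 U z (fun _ => v) = inner ℝ (gradient U z) v := by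
  rw [iteratedFDeriv_one_apply, inner_gradient_left]

lemma norm_grad {n : ℕ} {U : Euc n → ℝ} (z : Euc n) :
    ‖gradient U z‖ = ‖fderiv ℝ U z‖ := by
  rw [← toDual_gradient, LinearIsometryEquiv.norm_map]

/-- log-Lipschitz -/
lemma log_lip {n : ℕ} {U : Euc n → ℝ} (hs : ContDiff ℝ 4 U) {C : ℝ}
    (h1 : ∀ x, 1 ≤ U x) (hg : ∀ x, ‖gradient U x‖ ≤ C * U x) (x y : Euc n) :
    |log (U y) - log (U x)| ≤ C * ‖y - x‖ := by
  have key : ∀ s : ℝ, HasDerivAt (fun s : ℝ => log (U (x + s • (y - x))))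
      (inner ℝ (gradient U (x + s • (y-x))) (y - x) / U (x + s • (y - x))) s := by
    intro s
    have := line_hasDerivAt hs x (y - x) 0 (by norm_num) s
    simp only [iteratedFDeriv_zero_apply] at this
    rw [← iter_one]
    exact this.log (by have := h1 (x + s • (y - x)); positivity)
  have := norm_image_sub_le_of_norm_deriv_le_segment_01' (C := C * ‖y - x‖)
    (fun s _ => (key s).hasDerivWithinAt) (fun s _ => ?_)
  · simpa using this
  · have hp : 0 < U (x + s • (y - x)) := lt_of_lt_of_le one_pos (h1 _)
    rw [norm_div, norm_eq_abs, norm_eq_abs, abs_of_pos hp, div_le_iff₀ hp]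
    calc _ ≤ ‖gradient U (x + s • (y-x))‖ * ‖y - x‖ := abs_real_inner_le_norm _ _
      _ ≤ C * U (x + s • (y - x)) * ‖y - x‖ := by gcongr; exact hg _
      _ = _ := by ring

lemma U_growth {n : ℕ} {U : Euc n → ℝ} (hs : ContDiff ℝ 4 U) {C : ℝ}
    (h1 : ∀ x, 1 ≤ U x) (hg : ∀ x, ‖gradient U x‖ ≤ C * U x) (x y : Euc n) :
    U y ≤ U x * exp (C * ‖y - x‖) := by
  have h := (abs_le.1 (log_lip hs h1 hg x y)).2
  have hx : 0 < U x := lt_of_lt_of_le one_pos (h1 _)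
  have hy : 0 < U y := lt_of_lt_of_le one_pos (h1 _)
  calc U y = exp (log (U y)) := (exp_log hy).symm
    _ ≤ exp (log (U x) + C * ‖y - x‖) := by gcongr; linarith
    _ = _ := by rw [exp_add, exp_log hx]

lemma U_growth_seg {n : ℕ} {U : Euc n → ℝ} (hs : ContDiff ℝ 4 U) {C : ℝ} (hC : 0 < C)
    (h1 : ∀ x, 1 ≤ U x) (hg : ∀ x, ‖gradient U x‖ ≤ C * U x) (x v : Euc n) {s : ℝ}
    (hs0 : 0 ≤ s) (hs1 : s ≤ 1) :
    U (x + s • v) ≤ U x * exp (C * ‖v‖) := by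
  refine (U_growth hs h1 hg x _).trans ?_
  have hx : 0 < U x := lt_of_lt_of_le one_pos (h1 _)
  have : ‖x + s • v - x‖ ≤ ‖v‖ := by
    rw [add_sub_cancel_left, norm_smul, norm_eq_abs, abs_of_nonneg hs0]
    exact mul_le_of_le_one_left (norm_nonneg _) hs1
  gcongr

lemma seg_bound {f f' : ℝ → ℝ} {M : ℝ} (hf : ∀ s, HasDerivAt f (f' s) s)
    (h0 : f 0 = 0) (hM : ∀ s, 0 ≤ s → s ≤ 1 → |f' s| ≤ M) {s : ℝ} (hs0 : 0 ≤ s) (hs1 : s ≤ 1) :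
    |f s| ≤ M := by
  have hM0 : 0 ≤ M := (abs_nonneg _).trans (hM 0 le_rfl zero_le_one)
  have := norm_image_sub_le_of_norm_deriv_le_segment' (f := f) (f' := f') (C := M) (a := 0) (b := 1)
    (fun s _ => (hf s).hasDerivWithinAt) (fun s hs => hM s hs.1 hs.2.le) s ⟨hs0, hs1⟩
  rw [h0] at this
  simp at this
  nlinarith

lemma seg_bound_le {f f' : ℝ → ℝ} {M : ℝ} (hM0 : 0 ≤ M) (hf : ∀ s, HasDerivAt f (f' s) s)
    (h0 : f 0 = 0) (hM : ∀ s, 0 ≤ s → s ≤ 1 → f' s ≤ M) {s : ℝ} (hs0 : 0 ≤ s) (hs1 : s ≤ 1) :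
    f s ≤ M := by
  have := image_le_of_deriv_right_le_deriv_boundary (f := f) (f' := f') (a := 0) (b := 1)
    (B := fun s => M * s) (B' := fun _ => M)
    (fun s _ => (hf s).continuousAt.continuousWithinAt) (fun s _ => (hf s).hasDerivWithinAt)
    (by simp [h0]) (by fun_prop)
    (fun s _ => by simpa using ((hasDerivAt_id s).const_mul M).hasDerivWithinAt)
    (fun s hs => hM s hs.1 hs.2.le) (show s ∈ Set.Icc (0:ℝ) 1 from ⟨hs0, hs1⟩)
  nlinarith

/-- second order upper bound for log U -/
lemma log_second {n : ℕ} {U : Euc n → ℝ} (hs : ContDiff ℝ 4 U) {C : ℝ} (hC : 0 < C)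
    (h1 : ∀ x, 1 ≤ U x) (h2 : ∀ x, ‖iteratedFDeriv ℝ 2 U x‖ ≤ C * U x) (x y : Euc n) :
    log (U y) - log (U x) ≤ inner ℝ (gradient U x) (y - x) / U x + C * ‖y - x‖ ^ 2 := by
  set v := y - x with hv
  set f0 : ℝ → ℝ := fun s => U (x + s • v) with hf0
  set f1 : ℝ → ℝ := fun s => iteratedFDeriv ℝ 1 U (x + s • v) (fun _ => v) with hf1
  set f2 : ℝ → ℝ := fun s => iteratedFDeriv ℝ 2 U (x + s • v) (fun _ => v) with hf2
  have d0 : ∀ s, HasDerivAt f0 (f1 s) s := by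
    intro s
    have := line_hasDerivAt hs x v 0 (by norm_num) s
    simpa only [iteratedFDeriv_zero_apply, zero_add] using this
  have d1 : ∀ s, HasDerivAt f1 (f2 s) s := fun s => line_hasDerivAt hs x v 1 (by norm_num) s
  have p0 : ∀ s, 0 < f0 s := fun s => lt_of_lt_of_le one_pos (h1 _)
  have e1 : ∀ s, HasDerivAt (fun s => log (f0 s) - log (f0 0) - s * (f1 0 / f0 0))
      (f1 s / f0 s - f1 0 / f0 0) s := by
    intro s
    have := (((d0 s).log (p0 s).ne').sub_const (log (f0 0))).sub
      ((hasDerivAt_id s).mul_const (f1 0 / f0 0))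
    convert! this using 1
    simp
  have e2 : ∀ s, HasDerivAt (fun s => f1 s / f0 s - f1 0 / f0 0)
      ((f2 s * f0 s - f1 s * f1 s) / f0 s ^ 2) s := by
    intro s
    exact ((d1 s).div (d0 s) (p0 s).ne').sub_const _
  have b2 : ∀ s, 0 ≤ s → s ≤ 1 → (f2 s * f0 s - f1 s * f1 s) / f0 s ^ 2 ≤ C * ‖v‖ ^ 2 := by
    intro s _ _
    have hp := p0 s
    rw [div_le_iff₀ (by positivity)]
    have : f2 s ≤ C * f0 s * ‖v‖ ^ 2 := by
      refine (le_abs_self _).trans ((line_bound _ _ 2).trans ?_)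
      gcongr; exact h2 _
    nlinarith [mul_self_nonneg (f1 s), mul_le_mul_of_nonneg_right this hp.le]
  have b1 : ∀ s, 0 ≤ s → s ≤ 1 → f1 s / f0 s - f1 0 / f0 0 ≤ C * ‖v‖ ^ 2 := by
    intro s a b
    exact seg_bound_le (by positivity) e2 (by simp) b2 a b
  have := seg_bound_le (s := 1) (by positivity) e1 (by simp) b1 zero_le_one le_rfl
  simp only [hf0, hf1, iter_one] at this
  simp only [one_smul, zero_smul, add_zero, one_mul, hv, add_sub_cancel] at this
  linarith

/-- trapezoid error -/
lemma trapezoid {n : ℕ} {U : Euc n → ℝ} (hs : ContDiff ℝ 4 U) {C : ℝ} (hC : 0 < C)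
    (h1 : ∀ x, 1 ≤ U x) (hg : ∀ x, ‖gradient U x‖ ≤ C * U x)
    (h3 : ∀ x, ‖iteratedFDeriv ℝ 3 U x‖ ≤ C * U x) (x y : Euc n) :
    |U y - U x - (1/2) * inner ℝ (gradient U x + gradient U y) (y - x)|
      ≤ C * U x * exp (C * ‖y - x‖) * ‖y - x‖ ^ 3 := by
  set v := y - x with hv
  set f0 : ℝ → ℝ := fun s => U (x + s • v) with hf0
  set f1 : ℝ → ℝ := fun s => iteratedFDeriv ℝ 1 U (x + s • v) (fun _ => v) with hf1
  set f2 : ℝ → ℝ := fun s => iteratedFDeriv ℝ 2 U (x + s • v) (fun _ => v) with hf2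
  set f3 : ℝ → ℝ := fun s => iteratedFDeriv ℝ 3 U (x + s • v) (fun _ => v) with hf3
  have d0 : ∀ s, HasDerivAt f0 (f1 s) s := by
    intro s
    have := line_hasDerivAt hs x v 0 (by norm_num) s
    simpa only [iteratedFDeriv_zero_apply, zero_add] using this
  have d1 : ∀ s, HasDerivAt f1 (f2 s) s := fun s => line_hasDerivAt hs x v 1 (by norm_num) s
  have d2 : ∀ s, HasDerivAt f2 (f3 s) s := fun s => line_hasDerivAt hs x v 2 (by norm_num) s
  have e1 : ∀ s, HasDerivAt (fun s => f0 s - f0 0 - s * ((1/2) * (f1 0 + f1 s)))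
      ((1/2) * f1 s - (1/2) * f1 0 - s * ((1/2) * f2 s)) s := by
    intro s
    have := ((d0 s).sub_const (f0 0)).sub
      ((hasDerivAt_id s).mul (((d1 s).const_add (f1 0)).const_mul (1/2)))
    convert! this using 1
    simp; ring
  have e2 : ∀ s, HasDerivAt (fun s => (1/2) * f1 s - (1/2) * f1 0 - s * ((1/2) * f2 s))
      (- s * ((1/2) * f3 s)) s := by
    intro s
    have := (((d1 s).const_mul (1/2)).sub_const ((1/2) * f1 0)).sub
      ((hasDerivAt_id s).mul ((d2 s).const_mul (1/2)))
    convert! this using 1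
    simp
  set M := C * U x * exp (C * ‖v‖) * ‖v‖ ^ 3 with hM
  have hx : 0 < U x := lt_of_lt_of_le one_pos (h1 _)
  have b2 : ∀ s, 0 ≤ s → s ≤ 1 → |(- s * ((1/2) * f3 s))| ≤ M := by
    intro s a b
    have : |f3 s| ≤ M := by
      refine (line_bound _ _ 3).trans ?_
      rw [hM]
      gcongr
      refine (h3 _).trans ?_
      rw [mul_assoc]
      gcongr
      exact U_growth_seg hs hC h1 hg x v a b
    rw [abs_mul, abs_mul, abs_neg, abs_of_nonneg a, abs_of_pos (by norm_num : (0:ℝ) < 1/2)]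
    nlinarith [abs_nonneg (f3 s)]
  have b1 := fun s a b => seg_bound e2 (by simp) b2 (s := s) a b
  have := seg_bound (s := 1) e1 (by simp) b1 zero_le_one le_rfl
  simp only [hf0, hf1, iter_one] at this
  simp only [one_smul, zero_smul, add_zero, one_mul, hv, add_sub_cancel] at this
  rw [inner_add_left]
  exact this

lemma grad_lip {n : ℕ} {U : Euc n → ℝ} (hs : ContDiff ℝ 4 U) {C : ℝ} (hC : 0 < C)
    (h1 : ∀ x, 1 ≤ U x) (hg : ∀ x, ‖gradient U x‖ ≤ C * U x)
    (h2 : ∀ x, ‖iteratedFDeriv ℝ 2 U x‖ ≤ C * U x) (x y : Euc n) :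
    ‖gradient U y - gradient U x‖ ≤ C * U x * exp (C * ‖y - x‖) * ‖y - x‖ := by
  have e : ‖gradient U y - gradient U x‖ = ‖fderiv ℝ U y - fderiv ℝ U x‖ := by
    rw [← toDual_gradient, ← toDual_gradient, ← map_sub, LinearIsometryEquiv.norm_map]
  rw [e]
  have hd : Differentiable ℝ (fderiv ℝ U) :=
    (hs.fderiv_right (m := 1) (by norm_num)).differentiable (by norm_num)
  refine (convex_segment x y).norm_image_sub_le_of_norm_fderiv_le (𝕜 := ℝ)
    (fun z _ => hd z) (fun z hz => ?_) (left_mem_segment ℝ x y) (right_mem_segment ℝ x y)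
  have : ‖fderiv ℝ (fderiv ℝ U) z‖ = ‖iteratedFDeriv ℝ 2 U z‖ := by
    rw [← norm_iteratedFDeriv_one, norm_iteratedFDeriv_fderiv]
  rw [this]
  refine (h2 z).trans ?_
  rw [mul_assoc]
  gcongr
  rw [segment_eq_image'] at hz
  obtain ⟨s, ⟨a, b⟩, rfl⟩ := hz
  exact U_growth_seg hs hC h1 hg x _ a b

lemma eulerDensity_pos {n : ℕ} {β h : ℝ} (hβ : 0 < β) (hh : 0 < h) (U : Euc n → ℝ) (x y : Euc n) :
    0 < eulerDensity n β h U x y := by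
  unfold eulerDensity; positivity

lemma accept_ge {n : ℕ} {U : Euc n → ℝ} {β h : ℝ} (hβ : 0 < β) (hh : 0 < h)
    (hs : ContDiff ℝ 4 U) {C : ℝ} (hC : 0 < C)
    (h1 : ∀ x, 1 ≤ U x) (hg : ∀ x, ‖gradient U x‖ ≤ C * U x)
    (h2 : ∀ x, ‖iteratedFDeriv ℝ 2 U x‖ ≤ C * U x)
    (h3 : ∀ x, ‖iteratedFDeriv ℝ 3 U x‖ ≤ C * U x) (x y : Euc n) :
    1 - accept n β h U x y ≤ β * (C * U x * exp (C * ‖y - x‖) * ‖y - x‖ ^ 3)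
      + β * h / 4 * ((C * U x * exp (C * ‖y - x‖) * ‖y - x‖) *
        (C * U x * (1 + exp (C * ‖y - x‖)))) := by
  set G := -β * (U y - U x - (1/2) * inner ℝ (gradient U x + gradient U y) (y - x))
    - β * h / 4 * (‖gradient U y‖ ^ 2 - ‖gradient U x‖ ^ 2) with hG
  have hr : (eulerDensity n β h U y x * exp (-β * U y)) /
         (eulerDensity n β h U x y * exp (-β * U x)) = exp G := by
    unfold eulerDensity
    have hA : 0 < (4 * π * β⁻¹ * h) ^ (-(n : ℝ) / 2) := by positivity
    generalize (4 * π * β⁻¹ * h) ^ (-(n : ℝ) / 2) = A at hA ⊢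
    rw [mul_assoc, mul_assoc A, mul_div_mul_left _ _ hA.ne', ← exp_add, ← exp_add, ← exp_sub]
    congr 1
    have e1 : ‖x - y + h • gradient U y‖ ^ 2 =
        ‖y - x‖ ^ 2 - 2 * h * inner ℝ (gradient U y) (y - x) + h ^ 2 * ‖gradient U y‖ ^ 2 := by
      rw [norm_add_sq_real, norm_sub_rev, norm_smul, inner_smul_right, mul_pow, norm_eq_abs, sq_abs,
        ← neg_sub y x, inner_neg_left, real_inner_comm]
      ring
    have e2 : ‖y - x + h • gradient U x‖ ^ 2 =
        ‖y - x‖ ^ 2 + 2 * h * inner ℝ (gradient U x) (y - x) + h ^ 2 * ‖gradient U x‖ ^ 2 := by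
      rw [norm_add_sq_real, norm_smul, inner_smul_right, mul_pow, norm_eq_abs, sq_abs,
        real_inner_comm]
      ring
    rw [e1, e2, hG, inner_add_left]
    field_simp
    ring
  have hGb : |G| ≤ β * (C * U x * exp (C * ‖y - x‖) * ‖y - x‖ ^ 3)
      + β * h / 4 * ((C * U x * exp (C * ‖y - x‖) * ‖y - x‖) *
        (C * U x * (1 + exp (C * ‖y - x‖)))) := by
    have hx : 0 < U x := lt_of_lt_of_le one_pos (h1 _)
    refine (abs_sub _ _).trans ?_
    rw [abs_mul, abs_mul, abs_neg, abs_of_pos hβ, abs_of_pos (by positivity : 0 < β * h / 4)]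
    gcongr
    · exact trapezoid hs hC h1 hg h3 x y
    · rw [sq_sub_sq, abs_mul, mul_comm]
      gcongr
      · exact (abs_norm_sub_norm_le _ _).trans (grad_lip hs hC h1 hg h2 x y)
      · rw [abs_of_nonneg (by positivity)]
        have a := hg x
        have b := hg y
        have c := mul_le_mul_of_nonneg_left (U_growth hs h1 hg x y) hC.le
        linarith
  unfold accept
  rw [hr]
  have := add_one_le_exp G
  have := neg_abs_le G
  have h0 := abs_nonneg G
  rcases min_choice 1 (exp G) with h | h <;> rw [h] <;> linarith

lemma cube_le_exp {t : ℝ} (ht : 0 ≤ t) : t ^ 3 ≤ 6 * exp t := by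
  have := pow_div_factorial_le_exp t ht 3
  norm_num [Nat.factorial] at this
  linarith

lemma sq_le_exp {t : ℝ} (ht : 0 ≤ t) : t ^ 2 ≤ 2 * exp t := by
  have := pow_div_factorial_le_exp t ht 2
  norm_num [Nat.factorial] at this
  linarith

lemma accept_ge' {n : ℕ} {U : Euc n → ℝ} {β h : ℝ} (hβ : 0 < β) (hh : 0 < h) (hh1 : h < 1)
    (hs : ContDiff ℝ 4 U) {C : ℝ} (hC : 0 < C)
    (h1 : ∀ x, 1 ≤ U x) (hg : ∀ x, ‖gradient U x‖ ≤ C * U x)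
    (h2 : ∀ x, ‖iteratedFDeriv ℝ 2 U x‖ ≤ C * U x)
    (h3 : ∀ x, ‖iteratedFDeriv ℝ 3 U x‖ ≤ C * U x) (x y : Euc n) :
    1 - accept n β h U x y ≤ (6 * β * C + β * C ^ 2 / 2) * √h ^ 3 * U x ^ 2 *
      exp ((2 * C + 1) * (‖y - x‖ / √h)) := by
  refine (accept_ge hβ hh hs hC h1 hg h2 h3 x y).trans ?_
  have hσ : 0 < √h := sqrt_pos.2 hh
  have hσ1 : √h ≤ 1 := sqrt_le_one.2 hh1.le
  have hhs : h = √h ^ 2 := (sq_sqrt hh.le).symm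
  set σ := √h
  set ρ := ‖y - x‖ / σ with hρ
  have hr : ‖y - x‖ = σ * ρ := by rw [hρ]; field_simp
  have hρ0 : 0 ≤ ρ := by positivity
  have hx := h1 x
  have hx0 : 0 < U x := by linarith
  rw [hr, hhs]
  have E1 : exp (C * (σ * ρ)) ≤ exp (C * ρ) := by
    gcongr; exact mul_le_of_le_one_left hρ0 hσ1
  have E2 : 1 ≤ exp (C * ρ) := one_le_exp (by positivity)
  have E3 : ρ ≤ exp ρ := by linarith [add_one_le_exp ρ]
  have E4 := cube_le_exp hρ0
  have E5 : exp ((2 * C + 1) * ρ) = exp (C * ρ) * exp (C * ρ) * exp ρ := by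
    rw [← exp_add, ← exp_add]; ring_nf
  have hexp := exp_pos ρ
  have hU2 : U x ≤ U x ^ 2 := by nlinarith
  calc _ ≤ β * (C * U x ^ 2 * exp (C * ρ) * (σ ^ 3 * (6 * exp ρ)))
      + β * σ ^ 2 / 4 * ((C * U x * exp (C * ρ) * (σ * exp ρ)) *
        (C * U x * (exp (C * ρ) + exp (C * ρ)))) := by
        rw [mul_pow]; gcongr
    _ ≤ β * (C * U x ^ 2 * (exp (C * ρ) * exp (C * ρ)) * (σ ^ 3 * (6 * exp ρ)))
      + β * σ ^ 2 / 4 * ((C * U x * exp (C * ρ) * (σ * exp ρ)) *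
        (C * U x * (exp (C * ρ) + exp (C * ρ)))) := by
        gcongr; exact le_mul_of_one_le_left (by positivity) E2
    _ = _ := by rw [E5]; ring

lemma exp_quad (t : ℝ) : exp t ≤ 1 + t + t ^ 2 * exp |t| := by
  have := Complex.norm_exp_sub_sum_le_norm_mul_exp (t : ℂ) 2
  simp [Finset.sum_range_succ] at this
  have e : Complex.exp t - (1 + t) = ((exp t - (1 + t) : ℝ) : ℂ) := by push_cast; rfl
  rw [e, Complex.norm_real, norm_eq_abs] at this
  linarith [le_abs_self (exp t - (1 + t))]

lemma pow_growth {n : ℕ} {U : Euc n → ℝ} {h : ℝ} (hh : 0 < h) (hh1 : h < 1)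
    (hs : ContDiff ℝ 4 U) {C : ℝ} (hC : 0 < C)
    (h1 : ∀ x, 1 ≤ U x) (hg : ∀ x, ‖gradient U x‖ ≤ C * U x) (p : ℕ) (x y : Euc n) :
    U y ^ p ≤ U x ^ p * exp (p * C * (‖y - x‖ / √h)) := by
  have hy : 0 < U y := lt_of_lt_of_le one_pos (h1 _)
  have hx : 0 < U x := lt_of_lt_of_le one_pos (h1 _)
  have hσ : 0 < √h := sqrt_pos.2 hh
  have hσ1 : √h ≤ 1 := sqrt_le_one.2 hh1.le
  calc U y ^ p ≤ (U x * exp (C * (‖y - x‖ / √h))) ^ p := by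
        gcongr
        refine (U_growth hs h1 hg x y).trans ?_
        gcongr
        exact le_div_self (norm_nonneg _) hσ hσ1
    _ = _ := by rw [mul_pow, ← exp_nat_mul, mul_assoc]

lemma pow_diff {n : ℕ} {U : Euc n → ℝ} {h : ℝ} (hh : 0 < h) (hh1 : h < 1)
    (hs : ContDiff ℝ 4 U) {C : ℝ} (hC : 0 < C)
    (h1 : ∀ x, 1 ≤ U x) (hg : ∀ x, ‖gradient U x‖ ≤ C * U x) (p : ℕ) (x y : Euc n) :
    |U y ^ p - U x ^ p| ≤ U x ^ p * exp (p * C * (‖y - x‖ / √h)) := by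
  have hy : 0 < U y := lt_of_lt_of_le one_pos (h1 _)
  have hx : 0 < U x := lt_of_lt_of_le one_pos (h1 _)
  have a := pow_growth hh hh1 hs hC h1 hg p x y
  have b : U x ^ p ≤ U x ^ p * exp (p * C * (‖y - x‖ / √h)) :=
    le_mul_of_one_le_right (by positivity) (one_le_exp (by positivity))
  have c : 0 < U y ^ p := by positivity
  have d : 0 < U x ^ p := by positivity
  rw [abs_le]; constructor <;> linarith

lemma pow_second {n : ℕ} {U : Euc n → ℝ} {h : ℝ} (hh : 0 < h) (hh1 : h < 1)
    (hs : ContDiff ℝ 4 U) {C : ℝ} (hC : 0 < C)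
    (h1 : ∀ x, 1 ≤ U x) (hg : ∀ x, ‖gradient U x‖ ≤ C * U x)
    (h2 : ∀ x, ‖iteratedFDeriv ℝ 2 U x‖ ≤ C * U x) (p : ℕ) (x y : Euc n) :
    U y ^ p - U x ^ p ≤ U x ^ p * (p * (inner ℝ (gradient U x) (y - x) / U x) +
      (2 * p * C + 2 * p ^ 2 * C ^ 2) * h * exp ((p * C + 1) * (‖y - x‖ / √h))) := by
  have hy : 0 < U y := lt_of_lt_of_le one_pos (h1 _)
  have hx : 0 < U x := lt_of_lt_of_le one_pos (h1 _)
  have hσ : 0 < √h := sqrt_pos.2 hh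
  have hσ1 : √h ≤ 1 := sqrt_le_one.2 hh1.le
  have hhs : h = √h ^ 2 := (sq_sqrt hh.le).symm
  set σ := √h
  set ρ := ‖y - x‖ / σ with hρ
  have hr : ‖y - x‖ = σ * ρ := by rw [hρ]; field_simp
  have hρ0 : 0 ≤ ρ := by positivity
  set ℓ := log (U y) - log (U x) with hℓ
  have a1 : |ℓ| ≤ C * ‖y - x‖ := log_lip hs h1 hg x y
  have a2 : ℓ ≤ _ := log_second hs hC h1 h2 x y
  set a := inner ℝ (gradient U x) (y - x) / U x
  have e : U y ^ p = U x ^ p * exp (p * ℓ) := by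
    have : U y = U x * exp ℓ := by rw [hℓ, exp_sub, exp_log hy, exp_log hx]; field_simp
    rw [this, mul_pow, ← exp_nat_mul]
  have a1' : |ℓ| ≤ C * ρ := by
    refine a1.trans ?_; rw [hr]; gcongr; exact mul_le_of_le_one_left hρ0 hσ1
  have q := exp_quad (p * ℓ)
  have hE : 0 < exp ρ := exp_pos _
  have hE1 : 1 ≤ exp (p * C * ρ) := one_le_exp (by positivity)
  have E5 : exp ((p * C + 1) * ρ) = exp (p * C * ρ) * exp ρ := by
    rw [← exp_add]; ring_nf
  have b1 : ‖y - x‖ ^ 2 ≤ h * (2 * exp ρ) := by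
    rw [hr, mul_pow, ← hhs]; gcongr; exact sq_le_exp hρ0
  have b2 : (p * ℓ) ^ 2 * exp |p * ℓ| ≤ p ^ 2 * (C ^ 2 * (h * (2 * exp ρ))) * exp (p * C * ρ) := by
    have : |(p:ℝ) * ℓ| ≤ p * C * ρ := by
      rw [abs_mul, Nat.abs_cast, mul_assoc]; gcongr
    rw [mul_pow]
    gcongr
    calc ℓ ^ 2 = |ℓ| ^ 2 := (sq_abs _).symm
      _ ≤ (C * ‖y - x‖) ^ 2 := by gcongr
      _ = C ^ 2 * ‖y - x‖ ^ 2 := by ring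
      _ ≤ _ := by gcongr
  have b3 : p * ℓ ≤ p * a + p * (C * (h * (2 * exp ρ))) * exp (p * C * ρ) := by
    calc p * ℓ ≤ p * (a + C * ‖y - x‖ ^ 2) := by gcongr
      _ = p * a + p * (C * ‖y - x‖ ^ 2) := by ring
      _ ≤ p * a + p * (C * (h * (2 * exp ρ))) := by gcongr
      _ ≤ _ := add_le_add_right (le_mul_of_one_le_right (by positivity) hE1) _
  rw [e]
  have : exp (p * ℓ) - 1 ≤ p * a + (2 * p * C + 2 * p ^ 2 * C ^ 2) * h * exp ((p * C + 1) * ρ) := by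
    rw [E5]; nlinarith
  calc _ = U x ^ p * (exp (p * ℓ) - 1) := by ring
    _ ≤ _ := by gcongr

/-! Gaussian integrals -/

lemma integrable_gauss {n : ℕ} {b : ℝ} (hb : 0 < b) :
    Integrable (fun v : Euc n => exp (-b * ‖v‖ ^ 2)) := by
  by_contra h
  have := GaussianFourier.integral_rexp_neg_mul_sq_norm (V := Euc n) hb
  rw [integral_undef h] at this
  have h2 : 0 < (π / b) ^ ((Module.finrank ℝ (Euc n) : ℝ) / 2) := by positivity
  linarith

lemma euler_eq {n : ℕ} {β h : ℝ} (U : Euc n → ℝ) (x y : Euc n) :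
    eulerDensity n β h U x y = (4 * π * β⁻¹ * h) ^ (-(n : ℝ) / 2) *
      exp (-(β / (4 * h)) * ‖y + (h • gradient U x - x)‖ ^ 2) := by
  unfold eulerDensity
  congr 2
  rw [show y - x + h • gradient U x = y + (h • gradient U x - x) by abel]
  rw [div_eq_mul_inv, mul_inv, mul_inv, inv_inv]
  ring

lemma euler_integral {n : ℕ} {β h : ℝ} (hβ : 0 < β) (hh : 0 < h) (U : Euc n → ℝ) (x : Euc n) :
    Integrable (fun y => eulerDensity n β h U x y) ∧ ∫ y, eulerDensity n β h U x y = 1 := by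
  simp_rw [euler_eq]
  have hb : 0 < β / (4 * h) := by positivity
  constructor
  · exact ((integrable_gauss hb).comp_add_right _).const_mul _
  · rw [integral_const_mul, integral_add_right_eq_self (fun v : Euc n => exp (-(β / (4 * h)) * ‖v‖ ^ 2)),
      GaussianFourier.integral_rexp_neg_mul_sq_norm hb, finrank_euclideanSpace_fin]
    have : π / (β / (4 * h)) = 4 * π * β⁻¹ * h := by field_simp
    rw [this, ← rpow_add (by positivity)]
    ring_nf; simp

lemma euler_moment {n : ℕ} {β h : ℝ} (hβ : 0 < β) (hh : 0 < h) (U : Euc n → ℝ) (x : Euc n)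
    {B l : ℝ} (hl : 0 ≤ l) (hB : ‖h • gradient U x‖ ≤ B * √h) :
    Integrable (fun y => eulerDensity n β h U x y * exp (l * (‖y - x‖ / √h))) ∧
    ∫ y, eulerDensity n β h U x y * exp (l * (‖y - x‖ / √h)) ≤
      2 ^ ((n : ℝ) / 2) * exp (l * B + 2 * l ^ 2 / β) := by
  have hb : 0 < β / (8 * h) := by positivity
  have hσ : 0 < √h := sqrt_pos.2 hh
  set A := (4 * π * β⁻¹ * h) ^ (-(n : ℝ) / 2) with hA
  have hA0 : 0 < A := by positivity
  set w := h • gradient U x - x with hw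
  have hInteg : Integrable (fun y : Euc n => exp (l * B + 2 * l ^ 2 / β) * A *
      exp (-(β / (8 * h)) * ‖y + w‖ ^ 2)) :=
    ((integrable_gauss hb).comp_add_right _).const_mul _
  have hle : ∀ y, eulerDensity n β h U x y * exp (l * (‖y - x‖ / √h)) ≤
      exp (l * B + 2 * l ^ 2 / β) * A * exp (-(β / (8 * h)) * ‖y + w‖ ^ 2) := by
    intro y
    rw [euler_eq, ← hA, ← hw, mul_assoc, ← exp_add, mul_comm _ A, mul_assoc, ← exp_add]
    refine mul_le_mul_of_nonneg_left (exp_le_exp.2 ?_) hA0.le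
    have h1 : ‖y - x‖ ≤ ‖y + w‖ + B * √h := by
      calc ‖y - x‖ = ‖(y + w) - h • gradient U x‖ := by rw [hw]; congr 1; abel
        _ ≤ _ := (norm_sub_le _ _).trans (by gcongr)
    have h2 : ‖y - x‖ / √h ≤ ‖y + w‖ / √h + B := by
      rw [div_le_iff₀ hσ, add_mul, div_mul_cancel₀ _ hσ.ne']; exact h1
    have h3 : l * (‖y + w‖ / √h) ≤ β / (8 * h) * ‖y + w‖ ^ 2 + 2 * l ^ 2 / β := by
      set t := ‖y + w‖ / √h with ht
      have e : β / (8 * h) * ‖y + w‖ ^ 2 = β / 8 * t ^ 2 := by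
        rw [ht, div_pow, sq_sqrt hh.le]; field_simp
      rw [e]
      have : 0 ≤ (β * t / 4 - l) ^ 2 * (2 / β) := by positivity
      have e2 : (β * t / 4 - l) ^ 2 * (2 / β) = β / 8 * t ^ 2 + 2 * l ^ 2 / β - l * t := by
        field_simp; ring
      linarith
    have h4 := mul_le_mul_of_nonneg_left h2 hl
    have e3 : β / (4 * h) * ‖y + w‖ ^ 2 = 2 * (β / (8 * h) * ‖y + w‖ ^ 2) := by
      field_simp; ring
    nlinarith
  have hI : Integrable (fun y => eulerDensity n β h U x y * exp (l * (‖y - x‖ / √h))) := by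
    refine hInteg.mono' ?_ (Eventually.of_forall fun y => ?_)
    · apply Continuous.aestronglyMeasurable
      unfold eulerDensity; fun_prop
    · rw [norm_eq_abs, abs_of_nonneg]
      · exact hle y
      · have := eulerDensity_pos hβ hh U x y; positivity
  refine ⟨hI, (integral_mono hI hInteg hle).trans (le_of_eq ?_)⟩
  rw [integral_const_mul, integral_add_right_eq_self (fun v : Euc n => exp (-(β / (8 * h)) * ‖v‖ ^ 2)),
      GaussianFourier.integral_rexp_neg_mul_sq_norm hb, finrank_euclideanSpace_fin, hA]
  have : π / (β / (8 * h)) = 2 * (4 * π * β⁻¹ * h) := by field_simp; norm_num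
  have hD : 0 < 4 * π * β⁻¹ * h := by positivity
  rw [this, mul_rpow (by norm_num) hD.le]
  have e : (4 * π * β⁻¹ * h) ^ (-(n : ℝ) / 2) * (4 * π * β⁻¹ * h) ^ ((n : ℝ) / 2) = 1 := by
    rw [← rpow_add (by positivity)]; ring_nf; simp
  calc _ = 2 ^ ((n : ℝ) / 2) * exp (l * B + 2 * l ^ 2 / β) * ((4 * π * β⁻¹ * h) ^ (-(n : ℝ) / 2) * (4 * π * β⁻¹ * h) ^ ((n : ℝ) / 2)) := by
        generalize 4 * π * β⁻¹ * h = D; generalize D ^ (-(n : ℝ) / 2) = D1; ring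
    _ = _ := by rw [e, mul_one]

lemma euler_center {n : ℕ} {β h : ℝ} (hβ : 0 < β) (hh : 0 < h) (U : Euc n → ℝ) (x : Euc n) :
    Integrable (fun y => eulerDensity n β h U x y * inner ℝ (gradient U x) (y - x)) ∧
    ∫ y, eulerDensity n β h U x y * inner ℝ (gradient U x) (y - x) = - h * ‖gradient U x‖ ^ 2 := by
  have hσ : 0 < √h := sqrt_pos.2 hh
  set g := gradient U x with hg
  have hI : Integrable (fun y => eulerDensity n β h U x y * inner ℝ g (y - x)) := by
    have hm := (euler_moment hβ hh U x (B := ‖h • gradient U x‖ / √h) (l := 1) zero_le_one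
      (by rw [div_mul_cancel₀ _ hσ.ne'])).1.const_mul (‖g‖ * √h)
    refine hm.mono' ?_ (Eventually.of_forall fun y => ?_)
    · apply Continuous.aestronglyMeasurable
      unfold eulerDensity; fun_prop
    · have hq := eulerDensity_pos hβ hh U x y
      rw [norm_mul, norm_eq_abs, abs_of_pos hq, norm_eq_abs, one_mul]
      have h1 := abs_real_inner_le_norm g (y - x)
      have h2 : ‖y - x‖ ≤ √h * exp (‖y - x‖ / √h) := by
        rw [← div_le_iff₀' hσ]; linarith [add_one_le_exp (‖y - x‖ / √h)]
      calc _ ≤ eulerDensity n β h U x y * (‖g‖ * (√h * exp (‖y - x‖ / √h))) := by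
            gcongr; exact h1.trans (by gcongr)
        _ = _ := by ring
  refine ⟨hI, ?_⟩
  obtain ⟨hq, hq1⟩ := euler_integral hβ hh U x
  set φ : Euc n → ℝ := fun z => (4 * π * β⁻¹ * h) ^ (-(n : ℝ) / 2) *
      exp (-(β / (4 * h)) * ‖z‖ ^ 2) * inner ℝ g z with hφ
  have h0 : ∫ z, φ z = 0 := by
    have := integral_neg_eq_self φ volume
    have e : ∀ z, φ (-z) = - φ z := by intro z; simp [hφ]
    simp_rw [e, integral_neg] at this
    linarith
  have e : ∀ y, eulerDensity n β h U x y * inner ℝ g (y - x) =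
      φ (y + (h • g - x)) - h * ‖g‖ ^ 2 * eulerDensity n β h U x y := by
    intro y
    rw [euler_eq, hφ]
    simp only [← hg, inner_add_right, inner_sub_right, inner_smul_right, real_inner_self_eq_norm_sq]
    ring
  have hI2 : Integrable (fun y => φ (y + (h • g - x))) := by
    have := hI.add (hq.const_mul (h * ‖g‖ ^ 2))
    refine this.congr (Eventually.of_forall fun y => ?_)
    simp only [Pi.add_apply]
    rw [e]; ring
  simp_rw [e]
  rw [integral_sub hI2 (hq.const_mul _), integral_add_right_eq_self φ, h0, integral_const_mul, hq1]
  ring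

lemma continuous_grad {n : ℕ} {U : Euc n → ℝ} (hs : ContDiff ℝ 4 U) : Continuous (gradient U) := by
  have : Continuous (fderiv ℝ U) := hs.continuous_fderiv (by norm_num)
  exact (LinearIsometryEquiv.continuous _).comp this

lemma meas_euler {n : ℕ} {β h : ℝ} {U : Euc n → ℝ} (hs : ContDiff ℝ 4 U) :
    Measurable (fun z : Euc n × Euc n => eulerDensity n β h U z.1 z.2) := by
  have := continuous_grad hs
  unfold eulerDensity
  apply Continuous.measurable
  fun_prop

lemma meas_min_div {X : Type*} [MeasurableSpace X] {a b c d : X → ℝ} (ha : Measurable a)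
    (hb : Measurable b) (hc : Measurable c) (hd : Measurable d) :
    Measurable (fun z => min 1 ((a z * b z) / (c z * d z))) :=
  measurable_const.min ((ha.mul hb).div (hc.mul hd))

lemma meas_euler_swap {n : ℕ} {β h : ℝ} {U : Euc n → ℝ} (hs : ContDiff ℝ 4 U) :
    Measurable (fun z : Euc n × Euc n => eulerDensity n β h U z.2 z.1) := by
  have := continuous_grad hs
  unfold eulerDensity
  apply Continuous.measurable
  fun_prop

lemma meas_gibbs_fac {X : Type*} [MeasurableSpace X] {β : ℝ} {f : X → ℝ} (hf : Measurable f) :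
    Measurable (fun z => exp (-β * f z)) :=
  Real.measurable_exp.comp (hf.const_mul (-β))

lemma meas_accept {n : ℕ} {β h : ℝ} {U : Euc n → ℝ} (hs : ContDiff ℝ 4 U) :
    Measurable (fun z : Euc n × Euc n => accept n β h U z.1 z.2) := by
  have h1 := meas_euler (β := β) (h := h) hs
  have h2 := meas_euler_swap (β := β) (h := h) hs
  have h3 : Measurable U := hs.continuous.measurable
  have h4 := meas_gibbs_fac (β := β) (h3.comp (measurable_snd (α := Euc n)))
  have h5 := meas_gibbs_fac (β := β) (h3.comp (measurable_fst (β := Euc n)))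
  simp only [accept]
  exact meas_min_div h2 h4 h1 h5

lemma meas_R {n : ℕ} {h E : ℝ} {U : Euc n → ℝ} (hs : ContDiff ℝ 4 U) :
    MeasurableSet (Rset n h E U) :=
  measurableSet_lt hs.continuous.measurable measurable_const

lemma meas_acceptBar {n : ℕ} {β h E : ℝ} {U : Euc n → ℝ} (hs : ContDiff ℝ 4 U) :
    Measurable (fun z : Euc n × Euc n => acceptBar n β h E U z.1 z.2) := by
  unfold acceptBar
  refine Measurable.ite ?_ (meas_accept hs) measurable_const
  exact (measurable_fst (meas_R hs)).inter (measurable_snd (meas_R hs))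

lemma measurable_wd {n : ℕ} {f : Euc n × Euc n → ℝ≥0∞} (hf : Measurable f) :
    Measurable (fun x => (volume : Measure (Euc n)).withDensity (fun y => f (x, y))) := by
  refine Measure.measurable_of_measurable_coe _ fun s hs => ?_
  simp_rw [withDensity_apply _ hs]
  exact hf.lintegral_prod_right'

lemma meas_eulerKernel {n : ℕ} {β h : ℝ} {U : Euc n → ℝ} (hs : ContDiff ℝ 4 U) :
    Measurable (eulerKernel n β h U) :=
  measurable_wd (f := fun z => ENNReal.ofReal (eulerDensity n β h U z.1 z.2)) (meas_euler hs).ennreal_ofReal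

lemma meas_bar {n : ℕ} {β h E : ℝ} {U : Euc n → ℝ} (hs : ContDiff ℝ 4 U) :
    Measurable (fun z : Euc n × Euc n =>
      ENNReal.ofReal (acceptBar n β h E U z.1 z.2 * eulerDensity n β h U z.1 z.2)) :=
  ((meas_acceptBar hs).mul (meas_euler hs)).ennreal_ofReal

lemma meas_patched {n : ℕ} {β h E : ℝ} {U : Euc n → ℝ} (hs : ContDiff ℝ 4 U) :
    Measurable (patchedKernel n β h E U) := by
  have h1 := measurable_wd (meas_bar (β := β) (h := h) (E := E) hs)
  have h2 := (meas_bar (β := β) (h := h) (E := E) hs).lintegral_prod_right' (ν := volume)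
  refine Measure.measurable_of_measurable_coe _ fun s hs' => ?_
  have h3 := (Measure.measurable_coe hs').comp h1
  have h4 : Measurable (fun x : Euc n => Measure.dirac x s) :=
    (Measure.measurable_coe hs').comp Measure.measurable_dirac
  unfold patchedKernel
  simp only [Measure.add_apply, Measure.smul_apply, smul_eq_mul]
  exact h3.add ((measurable_const.sub h2).mul h4)

lemma accept_nonneg {n : ℕ} {β h : ℝ} (hβ : 0 < β) (hh : 0 < h) (U : Euc n → ℝ) (x y : Euc n) :
    0 ≤ accept n β h U x y := by
  have := eulerDensity_pos hβ hh U x y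
  have := eulerDensity_pos hβ hh U y x
  unfold accept
  positivity

lemma bar_nonneg {n : ℕ} {β h E : ℝ} (hβ : 0 < β) (hh : 0 < h) (U : Euc n → ℝ) (x y : Euc n) :
    0 ≤ acceptBar n β h E U x y := by
  unfold acceptBar
  split_ifs
  · exact accept_nonneg hβ hh U x y
  · exact le_rfl

lemma bar_le_one {n : ℕ} {β h E : ℝ} (U : Euc n → ℝ) (x y : Euc n) :
    acceptBar n β h E U x y ≤ 1 := by
  unfold acceptBar
  split_ifs
  · exact min_le_left _ _
  · exact zero_le_one

/-- acceptance mass -/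
def accMass (n : ℕ) (β h E : ℝ) (U : Euc n → ℝ) (x : Euc n) : ℝ≥0∞ :=
  ∫⁻ y, ENNReal.ofReal (acceptBar n β h E U x y * eulerDensity n β h U x y)

lemma patched_lintegral {n : ℕ} {β h E : ℝ} {U : Euc n → ℝ} (hs : ContDiff ℝ 4 U) (x : Euc n)
    {f : Euc n → ℝ≥0∞} (hf : Measurable f) :
    ∫⁻ y, f y ∂(patchedKernel n β h E U x) =
      (∫⁻ y, ENNReal.ofReal (acceptBar n β h E U x y * eulerDensity n β h U x y) * f y)
      + (1 - accMass n β h E U x) * f x := by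
  have h1 : Measurable (fun y : Euc n =>
      ENNReal.ofReal (acceptBar n β h E U x y * eulerDensity n β h U x y)) :=
    (meas_bar hs).comp (measurable_const.prodMk measurable_id)
  unfold patchedKernel
  rw [lintegral_add_measure, lintegral_smul_measure, lintegral_dirac' _ hf,
    lintegral_withDensity_eq_lintegral_mul _ h1 hf]
  rfl

lemma euler_lintegral {n : ℕ} {β h : ℝ} {U : Euc n → ℝ} (hs : ContDiff ℝ 4 U) (x : Euc n)
    {f : Euc n → ℝ≥0∞} (hf : Measurable f) :
    ∫⁻ y, f y ∂(eulerKernel n β h U x) =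
      ∫⁻ y, ENNReal.ofReal (eulerDensity n β h U x y) * f y := by
  have h1 : Measurable (fun y : Euc n => ENNReal.ofReal (eulerDensity n β h U x y)) :=
    ((meas_euler hs).comp (measurable_prodMk_left (x := x))).ennreal_ofReal
  unfold eulerKernel
  rw [lintegral_withDensity_eq_lintegral_mul _ h1 hf]
  rfl

lemma euler_mass {n : ℕ} {β h : ℝ} (hβ : 0 < β) (hh : 0 < h) (U : Euc n → ℝ) (x : Euc n) :
    ∫⁻ y, ENNReal.ofReal (eulerDensity n β h U x y) = 1 := by
  obtain ⟨a, b⟩ := euler_integral hβ hh U x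
  rw [← ofReal_integral_eq_lintegral_ofReal a
    (Eventually.of_forall fun y => (eulerDensity_pos hβ hh U x y).le), b, ENNReal.ofReal_one]

lemma bar_le_euler {n : ℕ} {β h E : ℝ} (hβ : 0 < β) (hh : 0 < h) (U : Euc n → ℝ) (x y : Euc n) :
    acceptBar n β h E U x y * eulerDensity n β h U x y ≤ eulerDensity n β h U x y :=
  mul_le_of_le_one_left (eulerDensity_pos hβ hh U x y).le (bar_le_one U x y)

lemma accMass_le_one {n : ℕ} {β h E : ℝ} (hβ : 0 < β) (hh : 0 < h) (U : Euc n → ℝ) (x : Euc n) :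
    accMass n β h E U x ≤ 1 := by
  rw [← euler_mass hβ hh U x]
  exact lintegral_mono fun y => ENNReal.ofReal_le_ofReal (bar_le_euler hβ hh U x y)

lemma patched_one {n : ℕ} {β h E : ℝ} (hβ : 0 < β) (hh : 0 < h) {U : Euc n → ℝ}
    (hs : ContDiff ℝ 4 U) (x : Euc n) : patchedKernel n β h E U x Set.univ = 1 := by
  have := patched_lintegral (β := β) (h := h) (E := E) hs x (f := fun _ => 1) measurable_const
  simp only [lintegral_one, mul_one] at this
  rw [this]
  exact add_tsub_cancel_of_le (accMass_le_one (E := E) hβ hh U x)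

lemma eulerK_one {n : ℕ} {β h : ℝ} (hβ : 0 < β) (hh : 0 < h) {U : Euc n → ℝ}
    (hs : ContDiff ℝ 4 U) (x : Euc n) : eulerKernel n β h U x Set.univ = 1 := by
  have := euler_lintegral (β := β) (h := h) hs x (f := fun _ => 1) measurable_const
  simp only [lintegral_one, mul_one] at this
  rw [this, euler_mass hβ hh]

lemma one_step {n : ℕ} {β h E : ℝ} (hβ : 0 < β) (hh : 0 < h) {U : Euc n → ℝ}
    (hs : ContDiff ℝ 4 U) (x : Euc n) {f : Euc n → ℝ≥0∞} (hf : Measurable f) (hf1 : ∀ y, f y ≤ 1) :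
    ∫⁻ y, f y ∂(patchedKernel n β h E U x) ≤
      ∫⁻ y, f y ∂(eulerKernel n β h U x) + (1 - accMass n β h E U x) := by
  rw [patched_lintegral hs x hf, euler_lintegral hs x hf]
  refine add_le_add (lintegral_mono fun y => ?_) ?_
  · exact mul_le_mul_left (ENNReal.ofReal_le_ofReal (bar_le_euler hβ hh U x y)) _
  · exact mul_le_of_le_one_right zero_le (hf1 x)

lemma R_pow {h : ℝ} (hh : 0 < h) : (h ^ (-(1:ℝ) / 4)) ^ 4 = h⁻¹ := by
  rw [← rpow_natCast, ← rpow_mul hh.le]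
  norm_num
  rw [rpow_neg_one]

lemma mem_R {n : ℕ} {h : ℝ} (hh : 0 < h) {U : Euc n → ℝ} (h1 : ∀ x, 1 ≤ U x) {x : Euc n}
    (hx : x ∈ Rset n h 1 U) : √h * U x ^ 2 ≤ 1 := by
  have hx0 : 0 < U x := lt_of_lt_of_le one_pos (h1 _)
  have : U x < 1 * h ^ (-(1:ℝ) / 4) := hx
  rw [one_mul] at this
  have h4 : U x ^ 4 ≤ h⁻¹ := by rw [← R_pow hh]; gcongr
  have h5 : (√h * U x ^ 2) ^ 2 ≤ 1 := by
    rw [mul_pow, sq_sqrt hh.le]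
    calc h * (U x ^ 2) ^ 2 = h * U x ^ 4 := by ring
      _ ≤ h * h⁻¹ := by gcongr
      _ = 1 := mul_inv_cancel₀ hh.ne'
  exact (sq_le_one_iff₀ (by positivity)).1 h5

lemma not_mem_R {n : ℕ} {h : ℝ} (hh : 0 < h) {U : Euc n → ℝ} {x : Euc n}
    (hx : x ∉ Rset n h 1 U) : 1 ≤ h ^ 3 * U x ^ 12 := by
  have : 1 * h ^ (-(1:ℝ) / 4) ≤ U x := not_lt.1 hx
  rw [one_mul] at this
  have h4 : h⁻¹ ≤ U x ^ 4 := by rw [← R_pow hh]; gcongr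
  have h5 : 1 ≤ h * U x ^ 4 := by
    calc 1 = h * h⁻¹ := (mul_inv_cancel₀ hh.ne').symm
      _ ≤ _ := by gcongr
  calc 1 ≤ (h * U x ^ 4) ^ 3 := one_le_pow₀ h5
    _ = _ := by ring

lemma R_drift {n : ℕ} {h : ℝ} (hh : 0 < h) {U : Euc n → ℝ} {C : ℝ} (hC : 0 < C)
    (h1 : ∀ x, 1 ≤ U x) (hg : ∀ x, ‖gradient U x‖ ≤ C * U x) {x : Euc n}
    (hx : x ∈ Rset n h 1 U) : ‖h • gradient U x‖ ≤ C * √h := by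
  have hσ : 0 < √h := sqrt_pos.2 hh
  have hr := mem_R hh h1 hx
  have hU := h1 x
  have h2 : √h * U x ≤ 1 := by
    refine le_trans ?_ hr; gcongr; nlinarith
  rw [norm_smul, norm_eq_abs, abs_of_pos hh]
  calc h * ‖gradient U x‖ ≤ h * (C * U x) := by gcongr; exact hg x
    _ = C * √h * (√h * U x) := by nth_rewrite 1 [← mul_self_sqrt hh.le]; ring
    _ ≤ C * √h * 1 := by gcongr
    _ = _ := mul_one _

lemma integrable_bar {n : ℕ} {β h E : ℝ} (hβ : 0 < β) (hh : 0 < h) {U : Euc n → ℝ}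
    (hs : ContDiff ℝ 4 U) (x : Euc n) :
    Integrable (fun y => acceptBar n β h E U x y * eulerDensity n β h U x y) := by
  refine (euler_integral hβ hh U x).1.mono' ?_ (Eventually.of_forall fun y => ?_)
  · exact (((meas_acceptBar hs).mul (meas_euler hs)).comp
      (measurable_const.prodMk measurable_id : Measurable fun y : Euc n => (x, y))).aestronglyMeasurable
  · rw [norm_eq_abs, abs_of_nonneg]
    · exact bar_le_euler hβ hh U x y
    · exact mul_nonneg (bar_nonneg hβ hh U x y) (eulerDensity_pos hβ hh U x y).le

lemma accMass_eq {n : ℕ} {β h E : ℝ} (hβ : 0 < β) (hh : 0 < h) {U : Euc n → ℝ}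
    (hs : ContDiff ℝ 4 U) (x : Euc n) :
    1 - accMass n β h E U x =
      ENNReal.ofReal (1 - ∫ y, acceptBar n β h E U x y * eulerDensity n β h U x y) := by
  unfold accMass
  have h0 : ∀ y, 0 ≤ acceptBar n β h E U x y * eulerDensity n β h U x y := fun y =>
    mul_nonneg (bar_nonneg hβ hh U x y) (eulerDensity_pos hβ hh U x y).le
  rw [← ofReal_integral_eq_lintegral_ofReal (integrable_bar hβ hh hs x) (Eventually.of_forall h0),
    ← ENNReal.ofReal_one, ← ENNReal.ofReal_sub _ (integral_nonneg h0)]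

/-- rejection bound -/
lemma reject_bound {n : ℕ} {U : Euc n → ℝ} {β : ℝ} (hβ : 0 < β)
    (hs : ContDiff ℝ 4 U) {C : ℝ} (hC : 0 < C)
    (h1 : ∀ x, 1 ≤ U x) (hg : ∀ x, ‖gradient U x‖ ≤ C * U x)
    (h2 : ∀ x, ‖iteratedFDeriv ℝ 2 U x‖ ≤ C * U x)
    (h3 : ∀ x, ‖iteratedFDeriv ℝ 3 U x‖ ≤ C * U x) :
    ∃ K > 0, ∀ h, 0 < h → h < 1 → ∀ x : Euc n,
      1 - accMass n β h 1 U x ≤ ENNReal.ofReal (K * √h ^ 3) * ENNReal.ofReal (U x ^ 3)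
        + ENNReal.ofReal (K * h ^ 3) * ENNReal.ofReal (U x ^ 12) := by
  set K1 := 6 * β * C + β * C ^ 2 / 2 with hK1
  set M : ℝ → ℝ := fun l => 2 ^ ((n : ℝ) / 2) * exp (l * C + 2 * l ^ 2 / β) with hM
  have hMp : ∀ l, 0 < M l := fun l => by simp only [hM]; positivity
  have hK1p : 0 < K1 := by positivity
  set K := 1 + K1 * M (2 * C + 1) + M ((12 : ℕ) * C) with hK
  have p1 : 0 < K1 * M (2 * C + 1) := mul_pos hK1p (hMp _)
  have p2 := hMp ((12 : ℕ) * C)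
  refine ⟨K, by positivity, fun h hh hh1 x => ?_⟩
  have hx := h1 x
  have hx0 : 0 < U x := by linarith
  have hσ : 0 < √h := sqrt_pos.2 hh
  rw [← ENNReal.ofReal_mul (by positivity), ← ENNReal.ofReal_mul (by positivity),
    ← ENNReal.ofReal_add (by positivity) (by positivity)]
  by_cases hR : x ∈ Rset n h 1 U
  · rw [accMass_eq hβ hh hs]
    apply ENNReal.ofReal_le_ofReal
    have hB := R_drift hh hC h1 hg hR
    obtain ⟨m1, m1'⟩ := euler_moment hβ hh U x (l := 2 * C + 1) (by positivity) hB
    obtain ⟨m2, m2'⟩ := euler_moment hβ hh U x (l := (12 : ℕ) * C) (by positivity) hB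
    obtain ⟨q, q1⟩ := euler_integral hβ hh U x
    have hi := integrable_bar (E := 1) hβ hh hs x
    have e1 : 1 - ∫ y, acceptBar n β h 1 U x y * eulerDensity n β h U x y =
        ∫ y, (eulerDensity n β h U x y - acceptBar n β h 1 U x y * eulerDensity n β h U x y) := by
      rw [integral_sub q hi, q1]
    rw [e1]
    calc _ ≤ ∫ y, (K1 * √h ^ 3 * U x ^ 2 * (eulerDensity n β h U x y * exp ((2 * C + 1) * (‖y - x‖ / √h)))
            + h ^ 3 * U x ^ 12 * (eulerDensity n β h U x y * exp ((12 : ℕ) * C * (‖y - x‖ / √h)))) := by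
          refine integral_mono (q.sub hi) ((m1.const_mul _).add (m2.const_mul _)) fun y => ?_
          have hq := eulerDensity_pos hβ hh U x y
          have : 1 - acceptBar n β h 1 U x y ≤ K1 * √h ^ 3 * U x ^ 2 * exp ((2 * C + 1) * (‖y - x‖ / √h))
              + h ^ 3 * U x ^ 12 * exp ((12 : ℕ) * C * (‖y - x‖ / √h)) := by
            by_cases hy : y ∈ Rset n h 1 U
            · rw [acceptBar, if_pos ⟨hR, hy⟩]
              have := accept_ge' hβ hh hh1 hs hC h1 hg h2 h3 x y
              rw [← hK1] at this
              have : 0 ≤ h ^ 3 * U x ^ 12 * exp ((12 : ℕ) * C * (‖y - x‖ / √h)) := by positivity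
              linarith
            · rw [acceptBar, if_neg (fun a => hy a.2)]
              have a := not_mem_R hh hy
              have b := mul_le_mul_of_nonneg_left (pow_growth hh hh1 hs hC h1 hg 12 x y)
                (by positivity : 0 ≤ h ^ 3)
              have : 0 ≤ K1 * √h ^ 3 * U x ^ 2 * exp ((2 * C + 1) * (‖y - x‖ / √h)) := by positivity
              linarith
          have := mul_le_mul_of_nonneg_right this hq.le
          simp only
          linarith
      _ = (K1 * √h ^ 3 * U x ^ 2 * ∫ y, (eulerDensity n β h U x y * exp ((2 * C + 1) * (‖y - x‖ / √h))))
            + h ^ 3 * U x ^ 12 * ∫ y, (eulerDensity n β h U x y * exp ((12 : ℕ) * C * (‖y - x‖ / √h))) := by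
          rw [integral_add (m1.const_mul _) (m2.const_mul _), integral_const_mul, integral_const_mul]
      _ ≤ K1 * √h ^ 3 * U x ^ 3 * M (2 * C + 1) + h ^ 3 * U x ^ 12 * M ((12 : ℕ) * C) := by
          have hU : U x ^ 2 ≤ U x ^ 3 := pow_le_pow_right₀ hx (by norm_num)
          refine add_le_add (mul_le_mul ?_ m1' ?_ (by positivity)) ?_
          · gcongr
          · exact integral_nonneg fun y => by
              have := eulerDensity_pos hβ hh U x y
              positivity
          · gcongr
      _ = (K1 * M (2 * C + 1)) * √h ^ 3 * U x ^ 3 + M ((12 : ℕ) * C) * h ^ 3 * U x ^ 12 := by ring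
      _ ≤ _ := by
          gcongr
          · linarith
          · linarith
  · refine tsub_le_self.trans ?_
    rw [← ENNReal.ofReal_one]
    apply ENNReal.ofReal_le_ofReal
    have a := not_mem_R hh hR
    have : 0 ≤ K * √h ^ 3 * U x ^ 3 := by positivity
    have : 1 * (h ^ 3 * U x ^ 12) ≤ K * (h ^ 3 * U x ^ 12) := by
      gcongr; linarith
    linarith

/-- Lyapunov bound -/
lemma lyap {n : ℕ} {U : Euc n → ℝ} {β : ℝ} (hβ : 0 < β)
    (hs : ContDiff ℝ 4 U) {C : ℝ} (hC : 0 < C)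
    (h1 : ∀ x, 1 ≤ U x) (hg : ∀ x, ‖gradient U x‖ ≤ C * U x)
    (h2 : ∀ x, ‖iteratedFDeriv ℝ 2 U x‖ ≤ C * U x)
    (h3 : ∀ x, ‖iteratedFDeriv ℝ 3 U x‖ ≤ C * U x) (p : ℕ) :
    ∃ K > 0, ∀ h, 0 < h → h < 1 → ∀ x : Euc n,
      ∫⁻ y, ENNReal.ofReal (U y ^ p) ∂(patchedKernel n β h 1 U x) ≤
        ENNReal.ofReal (1 + K * h) * ENNReal.ofReal (U x ^ p) := by
  set K1 := 6 * β * C + β * C ^ 2 / 2 with hK1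
  set K2 := 2 * p * C + 2 * p ^ 2 * C ^ 2 with hK2
  set L := p * C + 2 * C + 1 with hL
  set M : ℝ := 2 ^ ((n : ℝ) / 2) * exp (L * C + 2 * L ^ 2 / β) with hM
  have hL0 : 0 ≤ L := by positivity
  have hMp : 0 < M := by positivity
  have hK1p : 0 < K1 := by positivity
  have hK2p : 0 ≤ K2 := by positivity
  refine ⟨(K1 + K2) * M, by positivity, fun h hh hh1 x => ?_⟩
  have hx := h1 x
  have hx0 : 0 < U x := by linarith
  have hσ : 0 < √h := sqrt_pos.2 hh
  have hUm : Measurable (fun y => ENNReal.ofReal (U y ^ p)) :=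
    (hs.continuous.measurable.pow_const p).ennreal_ofReal
  rw [patched_lintegral hs x hUm]
  by_cases hR : x ∈ Rset n h 1 U
  · have hB := R_drift hh hC h1 hg hR
    obtain ⟨m1, m1'⟩ := euler_moment hβ hh U x (l := L) hL0 hB
    obtain ⟨m2, m2'⟩ := euler_moment hβ hh U x (l := p * C) (by positivity) hB
    obtain ⟨c1, c2⟩ := euler_center hβ hh U x
    have hi := integrable_bar (E := 1) hβ hh hs x
    have hbq : ∀ y, 0 ≤ acceptBar n β h 1 U x y * eulerDensity n β h U x y := fun y =>
      mul_nonneg (bar_nonneg hβ hh U x y) (eulerDensity_pos hβ hh U x y).le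
    have hUy : ∀ y, 0 < U y := fun y => lt_of_lt_of_le one_pos (h1 y)
    have hiV : Integrable (fun y => acceptBar n β h 1 U x y * eulerDensity n β h U x y * U y ^ p) := by
      refine (m2.const_mul (U x ^ p)).mono' ?_ (Eventually.of_forall fun y => ?_)
      · exact hi.aestronglyMeasurable.mul (hs.continuous.pow p).aestronglyMeasurable
      · have hy := hUy y
        rw [norm_eq_abs, abs_of_nonneg (mul_nonneg (hbq y) (by positivity))]
        have hq := eulerDensity_pos hβ hh U x y
        calc _ ≤ eulerDensity n β h U x y * (U x ^ p * exp (p * C * (‖y - x‖ / √h))) := by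
              gcongr
              · exact bar_le_euler hβ hh U x y
              · exact pow_growth hh hh1 hs hC h1 hg p x y
          _ = _ := by ring
    have e1 : ∫⁻ y, ENNReal.ofReal (acceptBar n β h 1 U x y * eulerDensity n β h U x y) *
        ENNReal.ofReal (U y ^ p) =
        ENNReal.ofReal (∫ y, acceptBar n β h 1 U x y * eulerDensity n β h U x y * U y ^ p) := by
      rw [ofReal_integral_eq_lintegral_ofReal hiV
        (Eventually.of_forall fun y => mul_nonneg (hbq y) (pow_nonneg (hUy y).le p))]
      simp_rw [ENNReal.ofReal_mul (hbq _)]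
    have hle1 : ∫ y, acceptBar n β h 1 U x y * eulerDensity n β h U x y ≤ 1 := by
      obtain ⟨q, q1⟩ := euler_integral hβ hh U x
      refine le_of_le_of_eq ?_ q1
      exact integral_mono hi q fun y => bar_le_euler hβ hh U x y
    have hA0 : 0 ≤ ∫ y, acceptBar n β h 1 U x y * eulerDensity n β h U x y * U y ^ p :=
      integral_nonneg fun y => mul_nonneg (hbq y) (pow_nonneg (hUy y).le p)
    rw [e1, accMass_eq hβ hh hs, ← ENNReal.ofReal_mul (by linarith), ← ENNReal.ofReal_mul (by positivity),
      ← ENNReal.ofReal_add hA0 (mul_nonneg (by linarith) (by positivity))]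
    apply ENNReal.ofReal_le_ofReal
    have key : (∫ y, acceptBar n β h 1 U x y * eulerDensity n β h U x y * U y ^ p) -
        U x ^ p * ∫ y, acceptBar n β h 1 U x y * eulerDensity n β h U x y ≤
        U x ^ p * ((K1 + K2) * M * h) := by
      rw [← integral_const_mul, ← integral_sub hiV (hi.const_mul _)]
      calc _ ≤ ∫ y, (U x ^ p * p / U x * (eulerDensity n β h U x y * inner ℝ (gradient U x) (y - x))
            + U x ^ p * (K1 + K2) * h * (eulerDensity n β h U x y * exp (L * (‖y - x‖ / √h)))) := by
            refine integral_mono (hiV.sub (hi.const_mul _)) ((c1.const_mul _).add (m1.const_mul _))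
              fun y => ?_
            have hq := eulerDensity_pos hβ hh U x y
            have hsec := pow_second hh hh1 hs hC h1 hg h2 p x y
            have hdiff := pow_diff hh hh1 hs hC h1 hg p x y
            have hacc := accept_ge' hβ hh hh1 hs hC h1 hg h2 h3 x y
            have hrho : 0 ≤ ‖y - x‖ / √h := by positivity
            have hsm : √h ^ 3 * U x ^ 2 ≤ h := by
              calc √h ^ 3 * U x ^ 2 = (√h * √h) * (√h * U x ^ 2) := by ring
                _ ≤ (√h * √h) * 1 := by gcongr; exact mem_R hh h1 hR
                _ = h := by rw [mul_self_sqrt hh.le, mul_one]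
            have hexp1 : exp ((p * C + 1) * (‖y - x‖ / √h)) ≤ exp (L * (‖y - x‖ / √h)) := by
              gcongr; rw [hL]; linarith
            have hexp2 : exp ((2 * C + 1) * (‖y - x‖ / √h)) * exp (p * C * (‖y - x‖ / √h)) =
                exp (L * (‖y - x‖ / √h)) := by
              rw [← exp_add, hL]; ring_nf
            have hsec' : U y ^ p - U x ^ p ≤ U x ^ p * (p * (inner ℝ (gradient U x) (y - x) / U x) +
                K2 * h * exp (L * (‖y - x‖ / √h))) := by
              refine hsec.trans ?_; gcongr
            have hrej : (1 - accept n β h U x y) * |U y ^ p - U x ^ p| ≤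
                U x ^ p * (K1 * h * exp (L * (‖y - x‖ / √h))) := by
              calc _ ≤ (K1 * h * exp ((2 * C + 1) * (‖y - x‖ / √h))) *
                    (U x ^ p * exp (p * C * (‖y - x‖ / √h))) := by
                    refine mul_le_mul (hacc.trans ?_) hdiff (abs_nonneg _) (by positivity)
                    rw [mul_assoc K1]
                    gcongr
                _ = _ := by rw [← hexp2]; ring
            have hn : 0 ≤ U x ^ p * (K1 * h * exp (L * (‖y - x‖ / √h))) := by positivity
            have hpt : acceptBar n β h 1 U x y * (U y ^ p - U x ^ p) ≤
                U x ^ p * (p * (inner ℝ (gradient U x) (y - x) / U x) +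
                (K1 + K2) * h * exp (L * (‖y - x‖ / √h))) := by
              by_cases hy : y ∈ Rset n h 1 U
              · rw [acceptBar, if_pos ⟨hR, hy⟩]
                have ha1 : accept n β h U x y ≤ 1 := min_le_left _ _
                have : -((1 - accept n β h U x y) * (U y ^ p - U x ^ p)) ≤
                    (1 - accept n β h U x y) * |U y ^ p - U x ^ p| := by
                  rw [← mul_neg]
                  exact mul_le_mul_of_nonneg_left (neg_le_abs _) (by linarith)
                linarith
              · rw [acceptBar, if_neg (fun a => hy a.2), zero_mul]
                have hxy : U x ≤ U y := (lt_of_lt_of_le (show U x < _ from hR) (not_lt.1 hy)).le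
                have : U x ^ p ≤ U y ^ p := by gcongr
                linarith
            have hfin := mul_le_mul_of_nonneg_left hpt hq.le
            have ee : U x ^ p * p / U x * (eulerDensity n β h U x y * inner ℝ (gradient U x) (y - x))
              = eulerDensity n β h U x y * (U x ^ p * (p * (inner ℝ (gradient U x) (y - x) / U x))) := by
              ring
            simp only
            rw [ee]
            linarith
        _ = U x ^ p * p / U x * (- h * ‖gradient U x‖ ^ 2)
            + U x ^ p * (K1 + K2) * h * ∫ y, (eulerDensity n β h U x y * exp (L * (‖y - x‖ / √h))) := by
            rw [integral_add (c1.const_mul _) (m1.const_mul _), integral_const_mul, integral_const_mul, c2]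
        _ ≤ 0 + U x ^ p * (K1 + K2) * h * M := by
            refine add_le_add ?_ (by gcongr)
            have : 0 ≤ U x ^ p * p / U x * (h * ‖gradient U x‖ ^ 2) := by positivity
            linarith
        _ = _ := by ring
    linarith
  · have e0 : ∀ y, acceptBar n β h 1 U x y = 0 := fun y => by
      rw [acceptBar, if_neg (fun a => hR a.1)]
    simp only [e0, accMass, zero_mul, ENNReal.ofReal_zero, lintegral_zero, tsub_zero, zero_add]
    refine mul_le_mul_left ?_ _
    rw [← ENNReal.ofReal_one]
    apply ENNReal.ofReal_le_ofReal
    have : 0 ≤ (K1 + K2) * M * h := by positivity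
    linarith

lemma iter_univ {X : Type*} [MeasurableSpace X] {κ : X → Measure X} (hκ : Measurable κ)
    (h1 : ∀ x, κ x Set.univ = 1) (k : ℕ) (x : X) : iterKernel κ k x Set.univ = 1 := by
  induction k with
  | zero => simp [iterKernel]
  | succ k ih =>
    rw [iterKernel, Measure.bind_apply MeasurableSet.univ hκ.aemeasurable]
    simp [h1, ih]

lemma iter_lyap {X : Type*} [MeasurableSpace X] {κ : X → Measure X} (hκ : Measurable κ)
    {V : X → ℝ≥0∞} (hV : Measurable V) {a : ℝ≥0∞}
    (h : ∀ x, ∫⁻ y, V y ∂(κ x) ≤ a * V x) (k : ℕ) (x : X) :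
    ∫⁻ y, V y ∂(iterKernel κ k x) ≤ a ^ k * V x := by
  induction k with
  | zero => simp [iterKernel, lintegral_dirac' x hV]
  | succ k ih =>
    rw [iterKernel, Measure.lintegral_bind hκ.aemeasurable hV.aemeasurable]
    calc _ ≤ ∫⁻ y, a * V y ∂(iterKernel κ k x) := lintegral_mono h
      _ = a * ∫⁻ y, V y ∂(iterKernel κ k x) := lintegral_const_mul _ hV
      _ ≤ a * (a ^ k * V x) := by gcongr
      _ = _ := by rw [pow_succ]; ring

lemma iter_close {X : Type*} [MeasurableSpace X] {κ κ' : X → Measure X} (hκ : Measurable κ)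
    (hκ' : Measurable κ') (h1' : ∀ x, κ' x Set.univ = 1) {r : X → ℝ≥0∞} (hr : Measurable r)
    (h : ∀ x (f : X → ℝ≥0∞), Measurable f → (∀ y, f y ≤ 1) →
      ∫⁻ y, f y ∂(κ x) ≤ ∫⁻ y, f y ∂(κ' x) + r x) (x : X) (D : ℝ≥0∞) (N : ℕ)
    (hD : ∀ k ≤ N, ∫⁻ y, r y ∂(iterKernel κ k x) ≤ D) (k : ℕ) (hk : k ≤ N)
    (f : X → ℝ≥0∞) (hf : Measurable f) (hf1 : ∀ y, f y ≤ 1) :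
    ∫⁻ y, f y ∂(iterKernel κ k x) ≤ ∫⁻ y, f y ∂(iterKernel κ' k x) + k * D := by
  induction k generalizing f with
  | zero => simp [iterKernel]
  | succ k ih =>
    rw [iterKernel, iterKernel, Measure.lintegral_bind hκ.aemeasurable hf.aemeasurable,
      Measure.lintegral_bind hκ'.aemeasurable hf.aemeasurable]
    have hg : Measurable (fun y => ∫⁻ z, f z ∂(κ' y)) :=
      (Measure.measurable_lintegral hf).comp hκ'
    have hg1 : ∀ y, ∫⁻ z, f z ∂(κ' y) ≤ 1 := fun y => by
      calc _ ≤ ∫⁻ z, 1 ∂(κ' y) := lintegral_mono hf1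
        _ = 1 := by simp [h1']
    calc _ ≤ ∫⁻ y, (∫⁻ z, f z ∂(κ' y) + r y) ∂(iterKernel κ k x) :=
          lintegral_mono fun y => h y f hf hf1
      _ = ∫⁻ y, ∫⁻ z, f z ∂(κ' y) ∂(iterKernel κ k x) + ∫⁻ y, r y ∂(iterKernel κ k x) :=
          lintegral_add_left hg _
      _ ≤ (∫⁻ y, ∫⁻ z, f z ∂(κ' y) ∂(iterKernel κ' k x) + k * D) + D :=
          add_le_add (ih (by omega) _ hg hg1) (hD k (by omega))
      _ = _ := by push_cast; ring

lemma tv_le {X : Type*} [MeasurableSpace X] {μ ν : Measure X} (hμ : μ Set.univ = 1)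
    (hν : ν Set.univ = 1) {ε : ℝ} (hε : 0 ≤ ε)
    (h : ∀ A, MeasurableSet A → μ A ≤ ν A + ENNReal.ofReal ε) : tvDist μ ν ≤ 2 * ε := by
  haveI : IsProbabilityMeasure μ := ⟨hμ⟩
  haveI : IsProbabilityMeasure ν := ⟨hν⟩
  have key : ∀ A, MeasurableSet A → (μ A).toReal ≤ (ν A).toReal + ε := fun A hA => by
    have := ENNReal.toReal_mono (by finiteness) (h A hA)
    rwa [ENNReal.toReal_add (by finiteness) (by finiteness), ENNReal.toReal_ofReal hε] at this
  unfold tvDist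
  haveI : Nonempty {A : Set X // MeasurableSet A} := ⟨⟨∅, MeasurableSet.empty⟩⟩
  refine mul_le_mul_of_nonneg_left (ciSup_le fun A => ?_) (by norm_num)
  have a := key A.1 A.2
  have b := key A.1ᶜ A.2.compl
  have c1 : (μ A.1ᶜ).toReal = 1 - (μ A.1).toReal := probReal_compl_eq_one_sub A.2
  have c2 : (ν A.1ᶜ).toReal = 1 - (ν A.1).toReal := probReal_compl_eq_one_sub A.2
  rw [c1, c2] at b
  rw [abs_le]
  constructor <;> linarith

lemma pow_le_exp' {K h T : ℝ} (hK : 0 < K) (hh : 0 < h) {k : ℕ} (hk : k * h ≤ T) :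
    ENNReal.ofReal (1 + K * h) ^ k ≤ ENNReal.ofReal (exp (K * T)) := by
  rw [← ENNReal.ofReal_pow (by positivity)]
  apply ENNReal.ofReal_le_ofReal
  calc (1 + K * h) ^ k ≤ (exp (K * h)) ^ k := by
        gcongr
        have := add_one_le_exp (K * h)
        linarith
    _ = exp (K * (k * h)) := by rw [← exp_nat_mul]; congr 1; ring
    _ ≤ _ := by gcongr

/-- Finite-time closeness of patched MALA and forward Euler in total variation. -/
theorem patched_mala_close_to_euler (n : ℕ) (β : ℝ) (hβ : 0 < β)
    (U : Euc n → ℝ) (hU : Assumption1 n β U) :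
    ∃ Estar > (0:ℝ), ∀ T > (0:ℝ), ∃ C > (0:ℝ),
      ∀ h : ℝ, 0 < h → h < 1 → ∀ x : Euc n, ∀ t ∈ Set.Icc (0:ℝ) T,
        tvDist (iterKernel (patchedKernel n β h Estar U) (Nat.floor (t/h)) x)
               (iterKernel (eulerKernel n β h U) (Nat.floor (t/h)) x)
          ≤ C * Real.sqrt h * U x ^ 3 := by
  have hs := hU.smooth
  have h1 := hU.one_le
  obtain ⟨C, hC, hb⟩ := hU.deriv_bound
  have hg : ∀ x, ‖gradient U x‖ ≤ C * U x := fun x => le_sup_right.trans (hb x)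
  have h2 : ∀ x, ‖iteratedFDeriv ℝ 2 U x‖ ≤ C * U x := fun x =>
    (le_sup_right.trans le_sup_left).trans (hb x)
  have h3 : ∀ x, ‖iteratedFDeriv ℝ 3 U x‖ ≤ C * U x := fun x =>
    ((le_sup_right.trans le_sup_left).trans le_sup_left).trans (hb x)
  obtain ⟨K, hK, hrej⟩ := reject_bound hβ hs hC h1 hg h2 h3
  obtain ⟨K3, hK3, hl3⟩ := lyap hβ hs hC h1 hg h2 h3 3
  obtain ⟨K12, hK12, hl12⟩ := lyap hβ hs hC h1 hg h2 h3 12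
  refine ⟨1, one_pos, fun T hT => ?_⟩
  set G := exp (K3 * T) + exp (K12 * T) with hG
  have hG0 : 0 < G := by positivity
  refine ⟨2 + 4 * T * K * G, by positivity, fun h hh hh1 x t ht => ?_⟩
  set N := Nat.floor (t / h) with hN
  have hx := h1 x
  have hx0 : 0 < U x := by linarith
  have hσ : 0 < √h := sqrt_pos.2 hh
  have hNT : N * h ≤ T := by
    have : (N : ℝ) ≤ t / h := Nat.floor_le (div_nonneg ht.1 hh.le)
    calc N * h ≤ t / h * h := by gcongr
      _ = t := by field_simp
      _ ≤ T := ht.2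
  have mp := meas_patched (β := β) (h := h) (E := 1) hs
  have me := meas_eulerKernel (β := β) (h := h) hs
  have up := iter_univ mp (patched_one hβ hh hs) N x
  have ue := iter_univ me (eulerK_one hβ hh hs) N x
  have mV : ∀ p : ℕ, Measurable (fun y => ENNReal.ofReal (U y ^ p)) := fun p =>
    (hs.continuous.measurable.pow_const p).ennreal_ofReal
  by_cases hsm : √h * U x ^ 3 ≤ 1
  · set D := K * G * (√h ^ 3 * U x ^ 3 + h ^ 3 * U x ^ 12) with hD
    have hD0 : 0 ≤ D := by positivity
    set r : Euc n → ℝ≥0∞ := fun y => ENNReal.ofReal (K * √h ^ 3) * ENNReal.ofReal (U y ^ 3) +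
      ENNReal.ofReal (K * h ^ 3) * ENNReal.ofReal (U y ^ 12) with hr
    have mr : Measurable r := ((mV 3).const_mul _).add ((mV 12).const_mul _)
    have hDk : ∀ k ≤ N, ∫⁻ y, r y ∂(iterKernel (patchedKernel n β h 1 U) k x) ≤
        ENNReal.ofReal D := by
      intro k hk
      have hkT : k * h ≤ T := le_trans (by gcongr) hNT
      simp only [hr]
      rw [lintegral_add_left ((mV 3).const_mul _), lintegral_const_mul _ (mV 3),
        lintegral_const_mul _ (mV 12)]
      have e3 : ∫⁻ y, ENNReal.ofReal (U y ^ 3) ∂(iterKernel (patchedKernel n β h 1 U) k x) ≤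
          ENNReal.ofReal G * ENNReal.ofReal (U x ^ 3) := by
        refine (iter_lyap mp (mV 3) (hl3 h hh hh1) k x).trans ?_
        gcongr
        refine (pow_le_exp' hK3 hh hkT).trans (ENNReal.ofReal_le_ofReal ?_)
        have := exp_pos (K12 * T)
        linarith
      have e12 : ∫⁻ y, ENNReal.ofReal (U y ^ 12) ∂(iterKernel (patchedKernel n β h 1 U) k x) ≤
          ENNReal.ofReal G * ENNReal.ofReal (U x ^ 12) := by
        refine (iter_lyap mp (mV 12) (hl12 h hh hh1) k x).trans ?_
        gcongr
        refine (pow_le_exp' hK12 hh hkT).trans (ENNReal.ofReal_le_ofReal ?_)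
        have := exp_pos (K3 * T)
        linarith
      calc _ ≤ ENNReal.ofReal (K * √h ^ 3) * (ENNReal.ofReal G * ENNReal.ofReal (U x ^ 3)) +
          ENNReal.ofReal (K * h ^ 3) * (ENNReal.ofReal G * ENNReal.ofReal (U x ^ 12)) := by gcongr
        _ = ENNReal.ofReal D := by
          rw [← ENNReal.ofReal_mul hG0.le, ← ENNReal.ofReal_mul hG0.le,
            ← ENNReal.ofReal_mul (by positivity), ← ENNReal.ofReal_mul (by positivity),
            ← ENNReal.ofReal_add (by positivity) (by positivity)]
          congr 1
          rw [hD]; ring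
    have main := iter_close mp me (eulerK_one hβ hh hs) mr
      (fun x f hf hf1 => (one_step (E := 1) hβ hh hs x hf hf1).trans
        (add_le_add le_rfl (hrej h hh hh1 x))) x (ENNReal.ofReal D) N hDk N le_rfl
    have tv := tv_le up ue (ε := N * D) (by positivity) fun A hA => by
      have := main (A.indicator 1) (measurable_one.indicator hA)
        (fun y => Set.indicator_le_self' (by simp) y)
      rw [lintegral_indicator_one hA, lintegral_indicator_one hA] at this
      rwa [ENNReal.ofReal_mul (by positivity), ENNReal.ofReal_natCast]
    refine tv.trans ?_
    have hh2 : h = √h ^ 2 := (sq_sqrt hh.le).symm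
    set s := √h with hsdef
    have b1 : s ^ 3 * U x ^ 3 = h * (s * U x ^ 3) := by rw [hh2]; ring
    have b2 : h ^ 3 * U x ^ 12 = h * (s * U x ^ 3) ^ 4 := by rw [hh2]; ring
    have b3 : (s * U x ^ 3) ^ 4 ≤ s * U x ^ 3 :=
      pow_le_of_le_one (by positivity) hsm (by norm_num)
    calc 2 * (N * D) = 2 * (K * G) * (N * h) * (s * U x ^ 3 + (s * U x ^ 3) ^ 4) := by
          rw [hD, b1, b2]; ring
      _ ≤ 2 * (K * G) * T * (s * U x ^ 3 + s * U x ^ 3) := by gcongr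
      _ ≤ 2 * (K * G) * T * (s * U x ^ 3 + s * U x ^ 3) + 2 * (s * U x ^ 3) :=
          le_add_of_nonneg_right (by positivity)
      _ = _ := by ring
  · push Not at hsm
    have tv := tv_le up ue (ε := 1) zero_le_one fun A hA => by
      calc _ ≤ iterKernel (patchedKernel n β h 1 U) N x Set.univ := measure_mono (Set.subset_univ _)
        _ = 1 := up
        _ ≤ _ := by simp
    refine tv.trans ?_
    have : 0 ≤ 4 * T * K * G * (√h * U x ^ 3) := by positivity
    linarith

end
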